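/- arXiv:1109.2860 — 2 statements merged into one kernel-verified Lean document; each statement's English description precedes it below -/
import Mathlib

section
/- Let n be an integer with n > 4 such that n is not divisible by 2 and not divisible by 3, and let ζ be a primitive n-th root of unity in the n-th cyclotomic field over ℚ. Then 1 − ζ + ζ² is a unit in the ring of integers of the n-th cyclotomic field. -/
open NumberField

/-- Let `n > 4` be an integer not divisible by `2` or `3`, and let `ζ` be a
primitive `n`-th root of unity in the `n`-th cyclotomic field over `ℚ`.
Then `1 - ζ + ζ^2` is a unit in the ring of integers. -/
theorem one_sub_zeta_add_zeta_sq_isUnit (n : ℕ+) (hn : 4 < (n : ℕ))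
    (h2 : ¬ (2 ∣ (n : ℕ))) (h3 : ¬ (3 ∣ (n : ℕ)))
    (ζ : CyclotomicField n ℚ) (hζ : IsPrimitiveRoot ζ n) :
    ∃ u : (𝓞 (CyclotomicField n ℚ))ˣ,
      (algebraMap (𝓞 (CyclotomicField n ℚ)) (CyclotomicField n ℚ))
        (u : 𝓞 (CyclotomicField n ℚ)) = 1 - ζ + ζ ^ 2 := by
  have hz := hζ.toInteger_isPrimitiveRoot
  have hc : Nat.Coprime 6 (n : ℕ) := by
    have a : Nat.Coprime 2 (n : ℕ) := (Nat.Prime.coprime_iff_not_dvd Nat.prime_two).2 h2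
    have b : Nat.Coprime 3 (n : ℕ) := (Nat.Prime.coprime_iff_not_dvd Nat.prime_three).2 h3
    exact Nat.Coprime.mul_left a b
  have hu := hz.geom_sum_isUnit (by omega) hc
  have hd : IsUnit (1 - hζ.toInteger + hζ.toInteger ^ 2) := by
    refine isUnit_of_dvd_unit
      ⟨(1 + hζ.toInteger) * (1 + hζ.toInteger + hζ.toInteger ^ 2), ?_⟩ hu
    simp only [Finset.sum_range_succ, Finset.sum_range_zero]
    ring
  obtain ⟨u, hu⟩ := hd
  refine ⟨u, ?_⟩
  rw [hu, map_add, map_sub, map_one, map_pow]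
  rfl
end

section
/- Let p be a prime with p ≥ 5. Consider subsets S of ℤ/pℤ such that no two distinct elements of S are equal or adjacent, i.e., for all i, j in S with i ≠ j one has j ≠ i + 1 and j ≠ i − 1 (such a set S records the starting positions of a placement of non-overlapping dominos on a circle of length p). Then the number of such nonempty subsets S of even cardinality equals the number of such subsets S of odd cardinality. -/
open Finset

def DInd (p : ℕ) (S : Finset (ZMod p)) : Prop :=
  ∀ i ∈ S, ∀ j ∈ S, i ≠ j → j ≠ i + 1 ∧ j ≠ i - 1

open Classical in
noncomputable def DW (p : ℕ) (s : Finset (ZMod p)) : ℤ :=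
  ∑ t ∈ s.powerset, if DInd p t then (-1) ^ t.card else 0

lemma DInd_insert (p : ℕ) (v : ZMod p) (t : Finset (ZMod p)) (hv : v ∉ t) :
    DInd p (insert v t) ↔ DInd p t ∧ ∀ x ∈ t, x ≠ v + 1 ∧ x ≠ v - 1 := by
  unfold DInd
  constructor
  · intro h
    refine ⟨fun i hi j hj => h i (mem_insert_of_mem hi) j (mem_insert_of_mem hj), ?_⟩
    intro x hx
    exact h v (mem_insert_self _ _) x (mem_insert_of_mem hx) (by rintro rfl; exact hv hx)
  · rintro ⟨h1, h2⟩ i hi j hj hij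
    rw [mem_insert] at hi hj
    rcases hi with rfl | hi <;> rcases hj with rfl | hj
    · exact absurd rfl hij
    · exact h2 j hj
    · obtain ⟨a, b⟩ := h2 i hi
      exact ⟨fun h => b (by rw [h]; ring), fun h => a (by rw [h]; ring)⟩
    · exact h1 i hi j hj hij

lemma DW_insert (p : ℕ) (v : ZMod p) (s s' : Finset (ZMod p)) (hv : v ∉ s)
    (hs' : ∀ x, x ∈ s' ↔ x ∈ s ∧ x ≠ v + 1 ∧ x ≠ v - 1) :
    DW p (insert v s) = DW p s - DW p s' := by
  classical
  unfold DW
  rw [sum_powerset_insert hv, sub_eq_add_neg, ← sum_neg_distrib]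
  congr 1
  symm
  have hsub : s'.powerset ⊆ s.powerset :=
    powerset_mono.2 fun x hx => ((hs' x).1 hx).1
  rw [← sum_subset_zero_on_sdiff hsub (f := fun t => -(if DInd p t then (-1 : ℤ) ^ t.card else 0))]
  · intro t ht
    rw [mem_sdiff, mem_powerset, mem_powerset] at ht
    rw [if_neg]
    intro h
    rw [DInd_insert p v t (fun h => hv (ht.1 h))] at h
    exact ht.2 fun x hx => (hs' x).2 ⟨ht.1 hx, h.2 x hx⟩
  · intro t ht
    rw [mem_powerset] at ht
    have hvt : v ∉ t := fun h => hv ((hs' v).1 (ht h)).1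
    have : DInd p (insert v t) ↔ DInd p t := by
      rw [DInd_insert p v t hvt]
      exact and_iff_left fun x hx => ((hs' x).1 (ht hx)).2
    simp only [this, card_insert_of_notMem hvt]
    split_ifs <;> ring

noncomputable def DP (p : ℕ) [NeZero p] (l r : ℕ) : Finset (ZMod p) :=
  univ.filter fun x => l ≤ x.val ∧ x.val < r

lemma mem_DP (p : ℕ) [NeZero p] (l r : ℕ) (x : ZMod p) :
    x ∈ DP p l r ↔ l ≤ x.val ∧ x.val < r := by simp [DP]

lemma D_eq_add (p : ℕ) [NeZero p] (hp : 5 ≤ p) (x y : ZMod p) :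
    x = y + 1 ↔ (x.val = y.val + 1 ∨ (x.val = 0 ∧ y.val + 1 = p)) := by
  have : Fact (1 < p) := ⟨by omega⟩
  rw [← (ZMod.val_injective p).eq_iff, ZMod.val_add, ZMod.val_one]
  have hy := ZMod.val_lt y
  have hx := ZMod.val_lt x
  rcases Nat.lt_or_ge (y.val + 1) p with h | h
  · rw [Nat.mod_eq_of_lt h]; omega
  · have : y.val + 1 = p := by omega
    rw [this, Nat.mod_self]; omega

lemma D_eq_sub (p : ℕ) [NeZero p] (hp : 5 ≤ p) (x y : ZMod p) :
    x = y - 1 ↔ (y.val = x.val + 1 ∨ (y.val = 0 ∧ x.val + 1 = p)) := by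
  rw [← D_eq_add p hp, eq_sub_iff_add_eq, eq_comm]

lemma DW_step (p : ℕ) [NeZero p] (hp : 5 ≤ p) (s s' t : Finset (ZMod p)) (r : ℕ) (hr : r < p)
    (ht : ∀ x, x ∈ t ↔ x.val = r ∨ x ∈ s) (hs : ∀ x ∈ s, x.val ≠ r)
    (hs' : ∀ x, x ∈ s' ↔ x ∈ s ∧ ¬ (x.val = r + 1 ∨ (x.val = 0 ∧ r + 1 = p)) ∧
      ¬ (r = x.val + 1 ∨ (r = 0 ∧ x.val + 1 = p))) :
    DW p t = DW p s - DW p s' := by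
  have hv : (r : ZMod p).val = r := ZMod.val_cast_of_lt hr
  rw [← DW_insert p (r : ZMod p) s s' (fun h => hs _ h hv)]
  · congr 1
    ext x
    rw [ht, mem_insert, ← (ZMod.val_injective p).eq_iff, hv]
  · intro x
    rw [hs', Ne, Ne, D_eq_add p hp, D_eq_sub p hp, hv]

lemma DW_empty (p : ℕ) : DW p ∅ = 1 := by
  simp [DW, DInd]

lemma DW_rec (p : ℕ) [NeZero p] (hp : 5 ≤ p) (l k : ℕ) (h : l + k + 2 < p) :
    DW p (DP p l (l + k + 2)) = DW p (DP p l (l + k + 1)) - DW p (DP p l (l + k)) := by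
  apply DW_step p hp _ _ _ (l + k + 1) (by omega)
  all_goals
    intro x
    have := ZMod.val_lt x
    simp only [mem_DP]
    omega

lemma DW_zero (p : ℕ) [NeZero p] (l : ℕ) : DW p (DP p l l) = 1 := by
  have : DP p l l = ∅ := by
    ext x
    simp [mem_DP]
  rw [this, DW_empty]

lemma DW_one (p : ℕ) [NeZero p] (hp : 5 ≤ p) (l : ℕ) (h : l + 1 < p) :
    DW p (DP p l (l + 1)) = 0 := by
  rw [DW_step p hp (DP p l l) (DP p l l) _ l (by omega), sub_self]
  all_goals
    intro x
    have := ZMod.val_lt x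
    simp only [mem_DP]
    omega

lemma DW_six (p : ℕ) [NeZero p] (hp : 5 ≤ p) (l k : ℕ) (h : l + 6 * k + 1 < p) :
    DW p (DP p l (l + 6 * k)) = 1 ∧ DW p (DP p l (l + 6 * k + 1)) = 0 := by
  induction k with
  | zero => exact ⟨DW_zero p l, DW_one p hp l (by omega)⟩
  | succ k ih =>
    obtain ⟨h0, h1⟩ := ih (by omega)
    have h2 := DW_rec p hp l (6 * k) (by omega)
    have h3 := DW_rec p hp l (6 * k + 1) (by omega)
    have h4 := DW_rec p hp l (6 * k + 2) (by omega)
    have h5 := DW_rec p hp l (6 * k + 3) (by omega)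
    have h6 := DW_rec p hp l (6 * k + 4) (by omega)
    have h7 := DW_rec p hp l (6 * k + 5) (by omega)
    simp only [← add_assoc, mul_add, mul_one] at *
    simp only [add_assoc, Nat.reduceAdd] at *
    constructor <;> linarith

lemma DW_univ (p : ℕ) [NeZero p] (hp : p.Prime) (hp5 : 5 ≤ p) : DW p univ = 1 := by
  have key : DW p univ = DW p (DP p 0 (p - 1)) - DW p (DP p 1 (p - 2)) := by
    apply DW_step p hp5 _ _ _ (p - 1) (by omega)
    all_goals
      intro x
      have := ZMod.val_lt x
      simp only [mem_DP, mem_univ, true_iff]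
      omega
  have h2 : ¬ 2 ∣ p := fun h => by
    have := (Nat.prime_dvd_prime_iff_eq Nat.prime_two hp).1 h
    omega
  have h3 : ¬ 3 ∣ p := fun h => by
    have := (Nat.prime_dvd_prime_iff_eq Nat.prime_three hp).1 h
    omega
  obtain ⟨k, hk | hk⟩ : ∃ k, p = 6 * k + 7 ∨ p = 6 * k + 5 := by
    by_cases h : p % 6 = 1
    · exact ⟨p / 6 - 1, by omega⟩
    · exact ⟨p / 6, by omega⟩
  · have e1 : p - 1 = 0 + (6 * k + 4) + 2 := by omega
    have e2 : p - 2 = 1 + (6 * k + 2) + 2 := by omega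
    obtain ⟨a0, a1⟩ := DW_six p hp5 0 k (by omega)
    have a2 := DW_rec p hp5 0 (6 * k) (by omega)
    have a3 := DW_rec p hp5 0 (6 * k + 1) (by omega)
    have a4 := DW_rec p hp5 0 (6 * k + 2) (by omega)
    have a5 := DW_rec p hp5 0 (6 * k + 3) (by omega)
    have a6 := DW_rec p hp5 0 (6 * k + 4) (by omega)
    obtain ⟨b0, b1⟩ := DW_six p hp5 1 k (by omega)
    have b2 := DW_rec p hp5 1 (6 * k) (by omega)
    have b3 := DW_rec p hp5 1 (6 * k + 1) (by omega)
    have b4 := DW_rec p hp5 1 (6 * k + 2) (by omega)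
    rw [e1, e2] at key
    simp only [add_assoc, Nat.reduceAdd] at *
    linarith
  · have e1 : p - 1 = 0 + (6 * k + 2) + 2 := by omega
    have e2 : p - 2 = 1 + (6 * k) + 2 := by omega
    obtain ⟨a0, a1⟩ := DW_six p hp5 0 k (by omega)
    have a2 := DW_rec p hp5 0 (6 * k) (by omega)
    have a3 := DW_rec p hp5 0 (6 * k + 1) (by omega)
    have a4 := DW_rec p hp5 0 (6 * k + 2) (by omega)
    obtain ⟨b0, b1⟩ := DW_six p hp5 1 k (by omega)
    have b2 := DW_rec p hp5 1 (6 * k) (by omega)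
    rw [e1, e2] at key
    simp only [add_assoc, Nat.reduceAdd] at *
    linarith

/-- Let `p ≥ 5` be a prime.  Among subsets `S` of `ℤ/pℤ` in which no two
distinct elements are adjacent (domino placements on a circle of length `p`),
the number of nonempty such subsets of even cardinality equals the number of
such subsets of odd cardinality. -/
theorem card_even_domino_placements_eq_card_odd (p : ℕ) (hp : p.Prime)
    (hp5 : 5 ≤ p) :
    Nat.card {S : Finset (ZMod p) //
        (∀ i ∈ S, ∀ j ∈ S, i ≠ j → j ≠ i + 1 ∧ j ≠ i - 1) ∧
        S.Nonempty ∧ Even S.card}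
      = Nat.card {S : Finset (ZMod p) //
        (∀ i ∈ S, ∀ j ∈ S, i ≠ j → j ≠ i + 1 ∧ j ≠ i - 1) ∧
        Odd S.card} := by
  classical
  have : NeZero p := ⟨by omega⟩
  have h := DW_univ p hp hp5
  change Nat.card {S : Finset (ZMod p) // DInd p S ∧ S.Nonempty ∧ Even S.card}
    = Nat.card {S : Finset (ZMod p) // DInd p S ∧ Odd S.card}
  rw [Nat.card_eq_fintype_card, Nat.card_eq_fintype_card, Fintype.card_subtype,
    Fintype.card_subtype]
  have e : ∀ t : Finset (ZMod p), (if DInd p t then (-1 : ℤ) ^ t.card else 0)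
      = (if t = ∅ then 1 else 0) + (if DInd p t ∧ t.Nonempty ∧ Even t.card then 1 else 0)
        - (if DInd p t ∧ Odd t.card then 1 else 0) := by
    intro t
    rcases t.eq_empty_or_nonempty with rfl | ht
    · simp [DInd]
    · by_cases hd : DInd p t
      · rcases Nat.even_or_odd t.card with he | ho
        · have := Nat.not_odd_iff_even.2 he
          simp [hd, ht, he, this, ht.ne_empty]
        · have := Nat.not_even_iff_odd.2 ho
          simp [hd, ho, this, ht.ne_empty]
      · simp [hd, ht.ne_empty]
  unfold DW at h
  rw [sum_congr rfl fun t _ => e t, sum_sub_distrib, sum_add_distrib, powerset_univ,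
    sum_ite_eq', sum_boole, sum_boole] at h
  simp only [mem_univ, if_true] at h
  have h' : ((#{S : Finset (ZMod p) | DInd p S ∧ S.Nonempty ∧ Even S.card} : ℕ) : ℤ)
    = (#{S : Finset (ZMod p) | DInd p S ∧ Odd S.card} : ℕ) := by linarith
  exact_mod_cast h'
end
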